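/- Let d ≥ 2 and m ≥ 1 be integers, let x₁,…,x_d be positive real numbers with e₁ = x₁+⋯+x_d, and let q(τ) = ∏_{i=1}^d (τ + x_i). Then for every integer K with 2 ≤ K ≤ md, ∫₀^∞ τ^{md−K} / q(τ)^m dτ ≥ (d/e₁)^{K−1} · (md−K)! (K−2)! / (md−1)! > 0. (This gives the strictly positive lower bound, alternating in sign, for all m-th order mixed partial derivatives of the entropy with respect to the elementary symmetric polynomials, since (−1)^{m−1} ∂^m H/∂e_{i₁}⋯∂e_{i_m} = (m−1)! ∫₀^∞ τ^{md−K}/q(τ)^m dτ with K = i₁+⋯+i_m.) -/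

import Mathlib

open MeasureTheory Real

/-!
By the weighted AM–GM inequality, `∏ i, (τ + x i) ^ w i ≤ (τ + c) ^ n`, where `n = ∑ i, w i` and `c`
is the weighted mean of the `x i`. The integral is therefore at least
`∫ τ in Ioi 0, τ ^ (n - K) / (τ + c) ^ n`, an Euler beta integral which one integration by parts per
power of `τ` reduces to an elementary one. Constant weights `w i = m` give `q(τ) ^ m`.
-/

section BetaIntegral

open Filter Topology

theorem hasDerivAt_pow_div_add_pow {c t : ℝ} (h : t + c ≠ 0) (a n : ℕ) :
    HasDerivAt (fun t : ℝ => t ^ a / (t + c) ^ n)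
      (a * (t ^ (a - 1) / (t + c) ^ n) - n * (t ^ a / (t + c) ^ (n + 1))) t := by
  have hden : HasDerivAt (fun t : ℝ => (t + c) ^ n) (n * (t + c) ^ (n - 1)) t := by
    simpa using ((hasDerivAt_id t).add_const c).fun_pow n
  refine ((hasDerivAt_pow a t).fun_div hden (pow_ne_zero n h)).congr_deriv ?_
  rcases n with _ | n
  · simp
  · rw [Nat.add_sub_cancel]
    field_simp
    ring

open Polynomial in
theorem tendsto_pow_div_add_pow_atTop (c : ℝ) {a n : ℕ} (h : a < n) :
    Tendsto (fun t : ℝ => t ^ a / (t + c) ^ n) atTop (𝓝 0) := by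
  have hdeg : (X ^ a : ℝ[X]).degree < ((X + C c) ^ n : ℝ[X]).degree := by simpa using h
  simpa only [eval_pow, eval_add, eval_X, eval_C] using
    div_tendsto_atTop_zero_of_degree_lt _ _ hdeg

theorem integrableOn_pow_div_add_pow {c : ℝ} (hc : 0 < c) {a n : ℕ} (h : a + 2 ≤ n) :
    IntegrableOn (fun t : ℝ => t ^ a / (t + c) ^ n) (Set.Ioi 0) := by
  obtain ⟨k, rfl⟩ := Nat.exists_eq_add_of_le h
  have hdom : IntegrableOn (fun t : ℝ => (t + c) ^ (-(k + 2 : ℕ) : ℝ)) (Set.Ioi 0) :=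
    integrableOn_add_rpow_Ioi_of_lt (by push_cast; linarith) (neg_neg_of_pos hc)
  refine hdom.mono' (by fun_prop : Measurable _).aestronglyMeasurable ?_
  filter_upwards [ae_restrict_mem measurableSet_Ioi] with t (ht : 0 < t)
  rw [Real.norm_of_nonneg (by positivity), rpow_neg (by positivity), rpow_natCast]
  calc t ^ a / (t + c) ^ (a + 2 + k)
      ≤ (t + c) ^ a / (t + c) ^ (a + 2 + k) := by gcongr; linarith
    _ = ((t + c) ^ (k + 2))⁻¹ := by field_simp; ring

theorem mul_integral_pow_div_add_pow_succ {c : ℝ} (hc : 0 < c) {a n : ℕ} (h : a + 2 ≤ n) :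
    (n : ℝ) * ∫ t in Set.Ioi (0 : ℝ), t ^ (a + 1) / (t + c) ^ (n + 1) =
      (a + 1) * ∫ t in Set.Ioi (0 : ℝ), t ^ a / (t + c) ^ n := by
  have hint₀ := (integrableOn_pow_div_add_pow hc h).const_mul ((a + 1 : ℕ) : ℝ)
  have hint₁ := (integrableOn_pow_div_add_pow hc (Nat.succ_le_succ h)).const_mul (n : ℝ)
  have hparts := integral_Ioi_of_hasDerivAt_of_tendsto'
    (fun t (ht : 0 ≤ t) => hasDerivAt_pow_div_add_pow (by positivity) (a + 1) n)
    (hint₀.sub hint₁) (tendsto_pow_div_add_pow_atTop c (by omega))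
  rw [Nat.add_sub_cancel, integral_sub hint₀ hint₁, integral_const_mul,
    integral_const_mul] at hparts
  push_cast at hparts
  rw [zero_pow a.succ_ne_zero, zero_div, sub_zero, sub_eq_zero] at hparts
  exact hparts.symm

theorem integral_one_div_add_pow {c : ℝ} (hc : 0 < c) (b : ℕ) :
    ∫ t in Set.Ioi (0 : ℝ), 1 / (t + c) ^ (b + 2) = 1 / ((b + 1) * c ^ (b + 1)) := by
  have hint := (integrableOn_pow_div_add_pow hc (a := 0) (n := b + 2) (by omega)).const_mul
    (-((b + 1 : ℕ) : ℝ))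
  have hderiv (t : ℝ) (ht : 0 ≤ t) : HasDerivAt (fun t : ℝ => t ^ 0 / (t + c) ^ (b + 1))
      (-((b + 1 : ℕ) : ℝ) * (t ^ 0 / (t + c) ^ (b + 2))) t := by
    simpa only [Nat.cast_zero, zero_mul, zero_sub, neg_mul] using
      hasDerivAt_pow_div_add_pow (by positivity : t + c ≠ 0) 0 (b + 1)
  have hftc := integral_Ioi_of_hasDerivAt_of_tendsto' hderiv hint
    (tendsto_pow_div_add_pow_atTop c (Nat.succ_pos b))
  simp only [integral_const_mul, pow_zero, zero_add, zero_sub] at hftc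
  push_cast at hftc
  rw [neg_mul, neg_inj] at hftc
  rw [eq_div_of_mul_eq (by positivity) ((mul_comm _ _).trans hftc), div_div, mul_comm]

theorem integral_pow_div_add_pow {c : ℝ} (hc : 0 < c) (a b : ℕ) :
    ∫ t in Set.Ioi (0 : ℝ), t ^ a / (t + c) ^ (a + b + 2) =
      a.factorial * b.factorial / ((a + b + 1).factorial * c ^ (b + 1)) := by
  induction a with
  | zero =>
    simp only [pow_zero, zero_add, integral_one_div_add_pow hc, Nat.factorial_succ b]
    push_cast
    field_simp
    simp
  | succ a ih =>
    have hrec := mul_integral_pow_div_add_pow_succ hc (a := a) (n := a + b + 2) (by omega)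
    rw [ih] at hrec
    rw [show a + 1 + b + 2 = a + b + 2 + 1 by ring, show a + 1 + b + 1 = a + b + 1 + 1 by ring,
      eq_div_of_mul_eq (by positivity) ((mul_comm _ _).trans hrec), Nat.factorial_succ a,
      Nat.factorial_succ (a + b + 1)]
    push_cast
    field_simp
    ring

end BetaIntegral

theorem prod_pow_le_weighted_mean_pow {ι : Type*} (s : Finset ι) (w : ι → ℕ) {z : ι → ℝ}
    (hz : ∀ i ∈ s, 0 ≤ z i) :
    ∏ i ∈ s, z i ^ w i ≤
      ((∑ i ∈ s, (w i : ℝ) * z i) / (∑ i ∈ s, w i : ℕ)) ^ ∑ i ∈ s, w i := by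
  rcases Nat.eq_zero_or_pos (∑ i ∈ s, w i) with hw | hw
  · have hw_zero : ∀ i ∈ s, w i = 0 := Finset.sum_eq_zero_iff.mp hw
    rw [hw, pow_zero, Finset.prod_congr rfl fun i hi => by rw [hw_zero i hi, pow_zero],
      Finset.prod_const_one]
  have hprod : 0 ≤ ∏ i ∈ s, z i ^ w i := Finset.prod_nonneg fun i hi => pow_nonneg (hz i hi) _
  have hmean := geom_mean_le_arith_mean s (fun i => (w i : ℝ)) z (fun i _ => Nat.cast_nonneg _)
    (by exact_mod_cast hw) hz
  simp only [rpow_natCast, ← Nat.cast_sum] at hmean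
  rw [← rpow_inv_natCast_pow hprod hw.ne']
  gcongr

section ShiftedProduct

variable {ι : Type*} [Fintype ι] (w : ι → ℕ) {x : ι → ℝ}

theorem prod_add_pow_le_add_weighted_mean_pow {t : ℝ} (h : ∀ i, 0 ≤ t + x i) :
    ∏ i, (t + x i) ^ w i ≤
      (t + (∑ i, (w i : ℝ) * x i) / (∑ i, w i : ℕ)) ^ ∑ i, w i := by
  rcases Nat.eq_zero_or_pos (∑ i, w i) with hw | hw
  · simpa [hw] using prod_pow_le_weighted_mean_pow Finset.univ w fun i _ => h i
  have hmean : (∑ i, (w i : ℝ) * (t + x i)) / (∑ i, w i : ℕ) =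
      t + (∑ i, (w i : ℝ) * x i) / (∑ i, w i : ℕ) := by
    simp only [mul_add, Finset.sum_add_distrib, ← Finset.sum_mul, ← Nat.cast_sum]
    field_simp
  exact hmean ▸ prod_pow_le_weighted_mean_pow Finset.univ w fun i _ => h i

theorem integrableOn_pow_div_prod_add_pow (hx : ∀ i, 0 < x i) {a : ℕ} (h : a + 2 ≤ ∑ i, w i) :
    IntegrableOn (fun t : ℝ => t ^ a / ∏ i, (t + x i) ^ w i) (Set.Ioi 0) := by
  rcases isEmpty_or_nonempty ι with _ | _
  · simp at h
  obtain ⟨j, hj⟩ := Finite.exists_min x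
  have hxj := hx j
  refine (integrableOn_pow_div_add_pow hxj h).mono'
    (by fun_prop : Measurable _).aestronglyMeasurable ?_
  filter_upwards [ae_restrict_mem measurableSet_Ioi] with t (ht : 0 < t)
  have hq : 0 < ∏ i, (t + x i) ^ w i := Finset.prod_pos fun i _ => pow_pos (add_pos ht (hx i)) _
  rw [Real.norm_of_nonneg (by positivity), ← Finset.prod_pow_eq_pow_sum]
  gcongr with i
  exact hj i

theorem weighted_mean_pos (hw : ∑ i, w i ≠ 0) (hx : ∀ i, 0 < x i) :
    0 < (∑ i, (w i : ℝ) * x i) / (∑ i, w i : ℕ) := by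
  obtain ⟨j, hj, hwj⟩ := Finset.exists_ne_zero_of_sum_ne_zero hw
  have hsum : 0 < ∑ i, (w i : ℝ) * x i :=
    Finset.sum_pos' (fun i _ => mul_nonneg (w i).cast_nonneg (hx i).le)
      ⟨j, hj, mul_pos (by positivity) (hx j)⟩
  positivity

theorem le_integral_pow_div_prod_add_pow (hx : ∀ i, 0 < x i) {a b : ℕ}
    (hw : ∑ i, w i = a + b + 2) :
    (a.factorial * b.factorial : ℝ) / ((a + b + 1).factorial *
        ((∑ i, (w i : ℝ) * x i) / (∑ i, w i : ℕ)) ^ (b + 1)) ≤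
      ∫ t in Set.Ioi (0 : ℝ), t ^ a / ∏ i, (t + x i) ^ w i := by
  have hc := weighted_mean_pos w (by omega) hx
  rw [← integral_pow_div_add_pow hc]
  refine setIntegral_mono_on (integrableOn_pow_div_add_pow hc (by omega))
    (integrableOn_pow_div_prod_add_pow w hx (by omega)) measurableSet_Ioi fun t (ht : 0 < t) => ?_
  rw [← hw]
  have hq : 0 < ∏ i, (t + x i) ^ w i := Finset.prod_pos fun i _ => pow_pos (add_pos ht (hx i)) _
  gcongr
  exact prod_add_pow_le_add_weighted_mean_pow w fun i => (add_pos ht (hx i)).le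

end ShiftedProduct

theorem higher_derivative_lower_bound_general {ι : Type*} [Fintype ι] (w : ι → ℕ) {x : ι → ℝ}
    (hx : ∀ i, 0 < x i) {K : ℕ} (hK2 : 2 ≤ K) (hK : K ≤ ∑ i, w i) :
    0 < ((∑ i, w i : ℕ) / ∑ i, (w i : ℝ) * x i) ^ (K - 1) *
        (((∑ i, w i) - K).factorial : ℝ) * ((K - 2).factorial : ℝ) /
        (((∑ i, w i) - 1).factorial : ℝ) ∧
    ((∑ i, w i : ℕ) / ∑ i, (w i : ℝ) * x i) ^ (K - 1) *
        (((∑ i, w i) - K).factorial : ℝ) * ((K - 2).factorial : ℝ) /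
        (((∑ i, w i) - 1).factorial : ℝ) ≤
      ∫ τ in Set.Ioi (0 : ℝ), τ ^ ((∑ i, w i) - K) / ∏ i, (τ + x i) ^ w i := by
  have hc := weighted_mean_pos w (by omega) hx
  obtain ⟨b, rfl⟩ := Nat.exists_eq_add_of_le' hK2
  obtain ⟨a, ha⟩ := Nat.exists_eq_add_of_le' hK
  have hbound := le_integral_pow_div_prod_add_pow w hx ha
  rw [← inv_div (∑ i, (w i : ℝ) * x i), show (∑ i, w i) - (b + 2) = a by omega,
    show (∑ i, w i) - 1 = a + b + 1 by omega, show b + 2 - 1 = b + 1 by omega, Nat.add_sub_cancel]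
  refine ⟨by positivity, hbound.trans_eq' ?_⟩
  rw [inv_pow]
  field_simp

/-- **Positive lower bound for all higher-order half-axis integrals.**
For `d ≥ 2`, `m ≥ 1`, positive reals `x₁, …, x_d` with `e₁ = Σ xᵢ`,
`q(τ) = ∏ (τ + xᵢ)`, and any `2 ≤ K ≤ md`:
`∫₀^∞ τ^{md−K}/q(τ)^m dτ ≥ (d/e₁)^{K−1} (md−K)!(K−2)!/(md−1)! > 0`. -/
theorem higher_derivative_lower_bound (d m K : ℕ) (hd : 2 ≤ d) (hm : 1 ≤ m)
    (hK2 : 2 ≤ K) (hKmd : K ≤ m * d)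
    (x : Fin d → ℝ) (hx : ∀ i, 0 < x i) :
    0 < ((d : ℝ) / (∑ i, x i)) ^ (K - 1) *
        ((m * d - K).factorial : ℝ) * ((K - 2).factorial : ℝ) / ((m * d - 1).factorial : ℝ) ∧
    ((d : ℝ) / (∑ i, x i)) ^ (K - 1) *
        ((m * d - K).factorial : ℝ) * ((K - 2).factorial : ℝ) / ((m * d - 1).factorial : ℝ) ≤
      ∫ τ in Set.Ioi (0 : ℝ), τ ^ (m * d - K) / (∏ i, (τ + x i)) ^ m := by
  have hn : ∑ _i : Fin d, m = m * d := by simp [mul_comm]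
  have hmean : ((m * d : ℕ) : ℝ) / ∑ i, (m : ℝ) * x i = d / ∑ i, x i := by
    rw [← Finset.mul_sum, Nat.cast_mul, mul_div_mul_left _ _ (by positivity)]
  simpa only [hn, hmean, Finset.prod_pow] using
    higher_derivative_lower_bound_general (fun _ => m) hx hK2 (hKmd.trans_eq hn.symm)
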